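/- arXiv:1809.02434 — 10 statements merged into one kernel-verified Lean document; each statement's English description precedes it below -/
import Mathlib

section
/- Let G = (V,E) be a finite simple graph, let W_1, …, W_t ⊆ V be subsets, and suppose there exists at least one nonempty subset of V distinct from every W_i. Call a pair (U_1, U_2) of disjoint subsets of V with |U_1| + |U_2| ≤ t admissible if no W_j (1 ≤ j ≤ t) satisfies both W_j ⊇ U_1 and W_j ∩ U_2 = ∅. Then the maximum of dens(Z) over all nonempty Z ⊆ V with Z ≠ W_i for every i equals the maximum, over admissible pairs (U_1, U_2), of the maximum of dens(Z) over all nonempty Z with U_1 ⊆ Z ⊆ V \ U_2. -/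
open Finset

/-- The number of edges of `G` with both endpoints in `U`. -/
noncomputable def edgeCount {V : Type*} (G : SimpleGraph V) (U : Finset V) : ℕ :=
  Set.ncard {e : Sym2 V | e ∈ G.edgeSet ∧ ∀ v ∈ e, v ∈ U}

/-- The density of the subgraph of `G` induced by `U`. -/
noncomputable def dens {V : Type*} (G : SimpleGraph V) (U : Finset V) : ℝ :=
  (edgeCount G U : ℝ) / U.card

/-- Theorem 5 of the paper, correctness of Algorithm 1. -/
theorem stmt_1 {V : Type*} [Fintype V] [DecidableEq V]
    (G : SimpleGraph V) {t : ℕ} (W : Fin t → Finset V)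
    (hex : ∃ Z : Finset V, Z.Nonempty ∧ ∀ i, Z ≠ W i) :
    sSup {x : ℝ | ∃ Z : Finset V, Z.Nonempty ∧ (∀ i, Z ≠ W i) ∧ x = dens G Z} =
    sSup {x : ℝ | ∃ U₁ U₂ Z : Finset V, Disjoint U₁ U₂ ∧ U₁.card + U₂.card ≤ t ∧
      (∀ j : Fin t, ¬ (U₁ ⊆ W j ∧ W j ∩ U₂ = ∅)) ∧
      Z.Nonempty ∧ U₁ ⊆ Z ∧ Z ⊆ U₂ᶜ ∧ x = dens G Z} := by
  congr 1
  ext x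
  constructor
  · rintro ⟨Z, hZ, hW, rfl⟩
    have h : ∀ i, ∃ v, ¬ (v ∈ Z ↔ v ∈ W i) := by
      intro i
      by_contra hc
      push Not at hc
      exact hW i (Finset.ext hc)
    choose v hv using h
    refine ⟨(univ.image v).filter (· ∈ Z), (univ.image v).filter (¬ · ∈ Z), Z,
      disjoint_filter_filter_not _ _ _, ?_, ?_, hZ, ?_, ?_, rfl⟩
    · rw [card_filter_add_card_filter_not]
      exact card_image_le.trans (by simp)
    · rintro j ⟨h1, h2⟩
      have hj : v j ∈ univ.image v := mem_image_of_mem v (mem_univ j)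
      by_cases hz : v j ∈ Z
      · exact hv j ⟨fun _ => h1 (mem_filter.2 ⟨hj, hz⟩), fun _ => hz⟩
      · refine hv j ⟨fun h => absurd h hz, fun h => ?_⟩
        have : v j ∈ W j ∩ (univ.image v).filter (¬ · ∈ Z) :=
          mem_inter.2 ⟨h, mem_filter.2 ⟨hj, hz⟩⟩
        rw [h2] at this
        simp at this
    · intro a ha
      exact (mem_filter.1 ha).2
    · intro a ha
      rw [mem_compl, mem_filter]
      exact fun h => h.2 ha
  · rintro ⟨U₁, U₂, Z, -, -, hadm, hZ, h1, h2, rfl⟩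
    refine ⟨Z, hZ, fun i hi => hadm i ?_, rfl⟩
    subst hi
    refine ⟨h1, ?_⟩
    ext a
    simp only [mem_inter, notMem_empty, iff_false, not_and]
    exact fun ha => mem_compl.1 (h2 ha)
end

section
/- Let G = (V,E) be a finite simple graph, let k ≥ 1, and let W_1, …, W_k be pairwise distinct nonempty subsets of V such that W_1 has maximum density among all nonempty subsets of V and, for each 2 ≤ i ≤ k, W_i has maximum density among all nonempty subsets of V distinct from each of W_1, …, W_{i-1}. Then for every λ > 0 and every tuple W°_1, …, W°_k of pairwise distinct nonempty subsets of V, one has ∑_{i=1}^k dens(W_i) ≥ ∑_{i=1}^k dens(W°_i) and λ·∑_{1≤i<j≤k} d(W_i,W_j) ≥ (1/2)·λ·∑_{1≤i<j≤k} d(W°_i,W°_j). -/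
open Finset

/-- The distance between two finite sets used in the paper. -/
noncomputable def ddist {α : Type*} [DecidableEq α] (U Z : Finset α) : ℝ :=
  if U = Z then 0 else 2 - ((U ∩ Z).card : ℝ) ^ 2 / ((U.card : ℝ) * (Z.card : ℝ))

theorem ddist_bounds {α : Type*} [DecidableEq α] (U Z : Finset α) (h : U ≠ Z)
    (hU : U.Nonempty) (hZ : Z.Nonempty) : 1 ≤ ddist U Z ∧ ddist U Z ≤ 2 := by
  have h1 : (0 : ℝ) < U.card := by exact_mod_cast hU.card_pos
  have h2 : (0 : ℝ) < Z.card := by exact_mod_cast hZ.card_pos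
  have h3 : ((U ∩ Z).card : ℝ) ≤ U.card := by exact_mod_cast card_le_card inter_subset_left
  have h4 : ((U ∩ Z).card : ℝ) ≤ Z.card := by exact_mod_cast card_le_card inter_subset_right
  have h5 : ((U ∩ Z).card : ℝ) ^ 2 / ((U.card : ℝ) * (Z.card : ℝ)) ≤ 1 := by
    rw [div_le_one (by positivity), sq]
    exact mul_le_mul h3 h4 (by positivity) h1.le
  have h6 : 0 ≤ ((U ∩ Z).card : ℝ) ^ 2 / ((U.card : ℝ) * (Z.card : ℝ)) := by positivity
  rw [ddist, if_neg h]
  constructor <;> linarith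

/-- Lemma 7 of the paper. -/
theorem stmt_3 {V : Type*} [Fintype V] [DecidableEq V]
    (G : SimpleGraph V) {k : ℕ} (hk : 1 ≤ k)
    (W : Fin k → Finset V) (hWne : ∀ i, (W i).Nonempty)
    (hWinj : Function.Injective W)
    (hmax : ∀ i : Fin k, ∀ Z : Finset V, Z.Nonempty →
      (∀ j : Fin k, j < i → Z ≠ W j) → dens G Z ≤ dens G (W i))
    (lam : ℝ) (hlam : 0 < lam)
    (Wo : Fin k → Finset V) (hWone : ∀ i, (Wo i).Nonempty)
    (hWoinj : Function.Injective Wo) :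
    (∑ i, dens G (W i)) ≥ (∑ i, dens G (Wo i)) ∧
    lam * (∑ i, ∑ j, if i < j then ddist (W i) (W j) else 0) ≥
      (1 / 2) * (lam * (∑ i, ∑ j, if i < j then ddist (Wo i) (Wo j) else 0)) := by
  constructor
  · have e1 : ∑ i, dens G (W i) = ∑ Z ∈ univ.image W, dens G Z := by
      rw [sum_image (fun _ _ _ _ h => hWinj h)]
    have e2 : ∑ i, dens G (Wo i) = ∑ Z ∈ univ.image Wo, dens G Z := by
      rw [sum_image (fun _ _ _ _ h => hWoinj h)]
    have hc : (univ.image W).card = (univ.image Wo).card := by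
      rw [card_image_of_injective _ hWinj, card_image_of_injective _ hWoinj]
    rw [e1, e2, ge_iff_le, ← sum_inter_add_sum_sdiff (univ.image W) (univ.image Wo) (dens G),
      ← sum_inter_add_sum_sdiff (univ.image Wo) (univ.image W) (dens G),
      inter_comm (univ.image Wo) (univ.image W)]
    have hc' := card_sdiff_add_card_inter (univ.image W) (univ.image Wo)
    have hc'' := card_sdiff_add_card_inter (univ.image Wo) (univ.image W)
    rw [inter_comm] at hc''
    have hcc : (univ.image Wo \ univ.image W).card = (univ.image W \ univ.image Wo).card := by
      omega
    let l : Fin k := ⟨k - 1, by omega⟩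
    have hB : ∑ Z ∈ univ.image Wo \ univ.image W, dens G Z ≤
        (univ.image Wo \ univ.image W).card • dens G (W l) := by
      apply sum_le_card_nsmul
      intro Z hZ
      simp only [mem_sdiff, mem_image, mem_univ, true_and, not_exists] at hZ
      obtain ⟨⟨i, rfl⟩, hZ⟩ := hZ
      exact hmax l _ (hWone i) (fun j _ h => hZ j h.symm)
    have hA : (univ.image W \ univ.image Wo).card • dens G (W l) ≤
        ∑ Z ∈ univ.image W \ univ.image Wo, dens G Z := by
      apply card_nsmul_le_sum
      intro Z hZ
      simp only [mem_sdiff, mem_image, mem_univ, true_and, not_exists] at hZ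
      obtain ⟨⟨i, rfl⟩, hZ⟩ := hZ
      refine hmax i _ (hWne l) (fun j hj h => ?_)
      have h7 := congrArg Fin.val (hWinj h)
      have h8 : j.val < i.val := hj
      have h9 := i.isLt
      simp only [l] at h7
      omega
    rw [hcc] at hB
    linarith
  · have key : (1 / 2) * (∑ i, ∑ j, if i < j then ddist (Wo i) (Wo j) else 0) ≤
        ∑ i, ∑ j, if i < j then ddist (W i) (W j) else 0 := by
      rw [mul_sum]
      refine sum_le_sum fun i _ => ?_
      rw [mul_sum]
      refine sum_le_sum fun j _ => ?_
      split_ifs with h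
      · have a := (ddist_bounds (W i) (W j) (fun e => h.ne (hWinj e)) (hWne i) (hWne j)).1
        have b := (ddist_bounds (Wo i) (Wo j) (fun e => h.ne (hWoinj e)) (hWone i) (hWone j)).2
        linarith
      · simp
    have := mul_le_mul_of_nonneg_left key hlam.le
    linarith
end

section
/- Let G = (V,E) be a finite simple graph, let 1 ≤ k ≤ |V|, and let λ > 0. Let W_1, …, W_k be pairwise distinct nonempty subsets of V such that W_1 has maximum density among all nonempty subsets of V and, for each 2 ≤ i ≤ k, W_i has maximum density among all nonempty subsets of V distinct from each of W_1, …, W_{i-1}. Let W'_1, …, W'_k be k pairwise disjoint singletons of V. Then for every tuple W°_1, …, W°_k of pairwise distinct nonempty subsets of V: max( r(W_1,…,W_k), r(W'_1,…,W'_k) ) ≥ (2/3) · r(W°_1,…,W°_k). -/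
open Finset

/-- The objective function of Top-k-Overlapping Densest Subgraphs. -/
noncomputable def rval {V : Type*} [DecidableEq V] (G : SimpleGraph V) (lam : ℝ)
    {k : ℕ} (W : Fin k → Finset V) : ℝ :=
  (∑ i, dens G (W i)) + lam * (∑ i, ∑ j, if i < j then ddist (W i) (W j) else 0)

lemma dens_nn {V : Type*} (G : SimpleGraph V) (U : Finset V) : 0 ≤ dens G U := by
  unfold _root_.dens; positivity

lemma ddist_le_two {α : Type*} [DecidableEq α] (U Z : Finset α) : ddist U Z ≤ 2 := by
  unfold ddist
  split_ifs
  · norm_num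
  · have : 0 ≤ ((U ∩ Z).card : ℝ) ^ 2 / ((U.card : ℝ) * (Z.card : ℝ)) := by positivity
    linarith

lemma one_le_ddist {α : Type*} [DecidableEq α] (U Z : Finset α) (h : U ≠ Z) :
    1 ≤ ddist U Z := by
  unfold ddist
  rw [if_neg h]
  have : ((U ∩ Z).card : ℝ) ^ 2 / ((U.card : ℝ) * (Z.card : ℝ)) ≤ 1 := by
    apply div_le_one_of_le₀ _ (by positivity)
    have h1 : ((U ∩ Z).card : ℝ) ≤ U.card := by
      exact_mod_cast card_le_card inter_subset_left
    have h2 : ((U ∩ Z).card : ℝ) ≤ Z.card := by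
      exact_mod_cast card_le_card inter_subset_right
    rw [sq]
    exact mul_le_mul h1 h2 (by positivity) (by positivity)
  linarith

lemma ddist_disj {α : Type*} [DecidableEq α] (U Z : Finset α) (h : U ≠ Z)
    (hd : Disjoint U Z) : ddist U Z = 2 := by
  unfold ddist
  rw [if_neg h, disjoint_iff_inter_eq_empty.mp hd]
  simp

lemma sum_greedy {ι β : Type*} [Fintype ι] [DecidableEq β] (f : β → ℝ) (W Wo : ι → β)
    (hW : Function.Injective W) (hWo : Function.Injective Wo)
    (h : ∀ i j, (∀ l, Wo j ≠ W l) → f (Wo j) ≤ f (W i)) :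
    ∑ i, f (Wo i) ≤ ∑ i, f (W i) := by
  classical
  set A := univ.image Wo with hA
  set B := univ.image W with hB
  have e1 : ∑ i, f (Wo i) = ∑ x ∈ A, f x := by
    rw [hA, sum_image (fun a _ b _ hab => hWo hab)]
  have e2 : ∑ i, f (W i) = ∑ x ∈ B, f x := by
    rw [hB, sum_image (fun a _ b _ hab => hW hab)]
  have hc : A.card = B.card := by
    rw [hA, hB, card_image_of_injective _ hWo, card_image_of_injective _ hW]
  have hc' : (A \ B).card = (B \ A).card := card_sdiff_comm hc
  rw [e1, e2, ← sum_sdiff_le_sum_sdiff]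
  rcases (A \ B).eq_empty_or_nonempty with h0 | h0
  · have : B \ A = ∅ := by
      rw [← card_eq_zero, ← hc', h0, card_empty]
    rw [h0, this]
  · obtain ⟨m, hm, hmax⟩ := exists_max_image (A \ B) f h0
    calc ∑ x ∈ A \ B, f x ≤ (A \ B).card • f m := sum_le_card_nsmul _ _ _ hmax
      _ = (B \ A).card • f m := by rw [hc']
      _ ≤ ∑ x ∈ B \ A, f x := by
        apply card_nsmul_le_sum
        intro x hx
        simp only [hA, hB, mem_sdiff, mem_image, mem_univ, true_and, not_exists] at hm hx
        obtain ⟨⟨j, rfl⟩, hj⟩ := hm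
        obtain ⟨⟨i, rfl⟩, -⟩ := hx
        exact h i j (fun l hl => hj l hl.symm)

/-- Theorem 8 of the paper. -/
theorem stmt_4 {V : Type*} [Fintype V] [DecidableEq V]
    (G : SimpleGraph V) {k : ℕ} (hk : 1 ≤ k) (hk' : k ≤ Fintype.card V)
    (lam : ℝ) (hlam : 0 < lam)
    (W : Fin k → Finset V) (hWne : ∀ i, (W i).Nonempty)
    (hWinj : Function.Injective W)
    (hmax : ∀ i : Fin k, ∀ Z : Finset V, Z.Nonempty →
      (∀ j : Fin k, j < i → Z ≠ W j) → dens G Z ≤ dens G (W i))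
    (W' : Fin k → Finset V) (hW'card : ∀ i, (W' i).card = 1)
    (hW'disj : ∀ i j : Fin k, i ≠ j → Disjoint (W' i) (W' j))
    (Wo : Fin k → Finset V) (hWone : ∀ i, (Wo i).Nonempty)
    (hWoinj : Function.Injective Wo) :
    max (rval G lam W) (rval G lam W') ≥ (2 / 3) * rval G lam Wo := by
  have hD : ∑ i, dens G (Wo i) ≤ ∑ i, dens G (W i) :=
    sum_greedy (dens G) W Wo hWinj hWoinj
      (fun i j hj => hmax i (Wo j) (hWone j) (fun l _ => hj l))
  have hD' : 0 ≤ ∑ i, dens G (W' i) := sum_nonneg (fun i _ => dens_nn G _)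
  set N : ℝ := ∑ i : Fin k, ∑ j : Fin k, if i < j then (1 : ℝ) else 0 with hN
  have h2N : 2 * N = ∑ i : Fin k, ∑ j : Fin k, if i < j then (2 : ℝ) else 0 := by
    rw [hN]; simp only [mul_sum, mul_ite, mul_one, mul_zero]
  have h1 : N ≤ ∑ i, ∑ j, if i < j then ddist (W i) (W j) else 0 := by
    refine sum_le_sum fun i _ => sum_le_sum fun j _ => ?_
    split_ifs with h
    · exact one_le_ddist _ _ (fun e => h.ne (hWinj e))
    · exact le_rfl
  have h2 : 2 * N ≤ ∑ i, ∑ j, if i < j then ddist (W' i) (W' j) else 0 := by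
    rw [h2N]
    refine sum_le_sum fun i _ => sum_le_sum fun j _ => ?_
    split_ifs with h
    · have hd := hW'disj i j h.ne
      refine (ddist_disj _ _ (fun e => ?_) hd).ge
      rw [e, disjoint_self] at hd
      have := hW'card j
      rw [hd] at this
      simp at this
    · exact le_rfl
  have h3 : (∑ i, ∑ j, if i < j then ddist (Wo i) (Wo j) else 0) ≤ 2 * N := by
    rw [h2N]
    refine sum_le_sum fun i _ => sum_le_sum fun j _ => ?_
    split_ifs with h
    · exact ddist_le_two _ _
    · exact le_rfl
  have m1 := mul_le_mul_of_nonneg_left h1 hlam.le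
  have m2 := mul_le_mul_of_nonneg_left h2 hlam.le
  have m3 := mul_le_mul_of_nonneg_left h3 hlam.le
  have a1 := le_max_left (rval G lam W) (rval G lam W')
  have a2 := le_max_right (rval G lam W) (rval G lam W')
  have r1 : (∑ i, dens G (W i)) + lam * N ≤ rval G lam W := by unfold rval; linarith
  have r2 : lam * (2 * N) ≤ rval G lam W' := by unfold rval; linarith
  have r3 : rval G lam Wo ≤ (∑ i, dens G (W i)) + lam * (2 * N) := by unfold rval; linarith
  linarith
end

section
/- Let V be a finite set and let W_1, …, W_t ⊆ V be subsets such that no two of them are crossing. Let Z ⊆ V be a nonempty subset with Z ≠ W_i for every 1 ≤ i ≤ t. Then there exist a set U_1 ⊆ Z with 1 ≤ |U_1| ≤ 2 and a set U_2 ⊆ V \ Z with |U_2| ≤ 1 such that no W_j (1 ≤ j ≤ t) satisfies both W_j ⊇ U_1 and W_j ∩ U_2 = ∅. -/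
open Finset

/-- Two subsets are crossing if they intersect and neither contains the other. -/
def Crossing {V : Type*} [DecidableEq V] (A B : Finset V) : Prop :=
  (A ∩ B).Nonempty ∧ (A \ B).Nonempty ∧ (B \ A).Nonempty

/-- Lemma 9 of the paper. -/
theorem stmt_5 {V : Type*} [Fintype V] [DecidableEq V] {t : ℕ}
    (W : Fin t → Finset V) (hcr : ∀ i j : Fin t, ¬ Crossing (W i) (W j))
    (Z : Finset V) (hZne : Z.Nonempty) (hZ : ∀ i, Z ≠ W i) :
    ∃ U₁ U₂ : Finset V, U₁ ⊆ Z ∧ 1 ≤ U₁.card ∧ U₁.card ≤ 2 ∧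
      U₂ ⊆ Zᶜ ∧ U₂.card ≤ 1 ∧
      ∀ j : Fin t, ¬ (U₁ ⊆ W j ∧ W j ∩ U₂ = ∅) := by
  classical
  have hlam : ∀ i j : Fin t, ∀ x, x ∈ W i → x ∈ W j → W i ⊆ W j ∨ W j ⊆ W i := by
    intro i j x hi hj
    by_contra hcon
    rw [not_or] at hcon
    exact hcr i j ⟨⟨x, mem_inter.2 ⟨hi, hj⟩⟩, sdiff_nonempty.2 hcon.1, sdiff_nonempty.2 hcon.2⟩
  obtain ⟨u, hu⟩ := hZne
  have h1 : ∃ U₁ : Finset V, U₁ ⊆ Z ∧ 1 ≤ U₁.card ∧ U₁.card ≤ 2 ∧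
      ∀ j, U₁ ⊆ W j → Z ⊆ W j := by
    rcases (univ.filter fun j => u ∈ W j ∧ ¬ Z ⊆ W j).eq_empty_or_nonempty with he | hne
    · refine ⟨{u}, by simpa using hu, by simp, by simp, fun j hj => ?_⟩
      by_contra hn
      have hm : j ∈ univ.filter fun j => u ∈ W j ∧ ¬ Z ⊆ W j := by
        simp only [mem_filter, mem_univ, true_and]
        exact ⟨by simpa using hj, hn⟩
      rw [he] at hm
      simp at hm
    · obtain ⟨m, hm, hmax⟩ := exists_max_image _ (fun j => (W j).card) hne
      simp only [mem_filter, mem_univ, true_and] at hm hmax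
      obtain ⟨v, hvZ, hvm⟩ := not_subset.1 hm.2
      refine ⟨{u, v}, ?_, ?_, card_le_two, fun j hj => ?_⟩
      · intro y hy
        simp only [mem_insert, mem_singleton] at hy
        rcases hy with rfl | rfl <;> assumption
      · exact card_pos.2 ⟨u, by simp⟩
      · by_contra hn
        have huj : u ∈ W j := hj (by simp)
        have hvj : v ∈ W j := hj (by simp)
        have hc := hmax j ⟨huj, hn⟩
        rcases hlam m j u hm.1 huj with h | h
        · exact hvm (eq_of_subset_of_card_le h hc ▸ hvj)
        · exact hvm (h hvj)
  have h2 : ∃ U₂ : Finset V, U₂ ⊆ Zᶜ ∧ U₂.card ≤ 1 ∧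
      ∀ j, Z ⊆ W j → W j ∩ U₂ ≠ ∅ := by
    rcases (univ.filter fun j => Z ⊆ W j).eq_empty_or_nonempty with he | hne
    · refine ⟨∅, by simp, by simp, fun j hj => ?_⟩
      have hm : j ∈ univ.filter fun j => Z ⊆ W j := by simpa using hj
      rw [he] at hm
      simp at hm
    · obtain ⟨n, hn, hmin⟩ := exists_min_image _ (fun j => (W j).card) hne
      simp only [mem_filter, mem_univ, true_and] at hn hmin
      obtain ⟨x, hxn, hxZ⟩ := not_subset.1 (fun h : W n ⊆ Z => hZ n (Subset.antisymm hn h))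
      refine ⟨{x}, by simpa using hxZ, by simp, fun j hj => ?_⟩
      have hsub : W n ⊆ W j := by
        rcases hlam n j u (hn hu) (hj hu) with h | h
        · exact h
        · exact (eq_of_subset_of_card_le h (hmin j hj)).symm.subset
      exact Nonempty.ne_empty ⟨x, mem_inter.2 ⟨hsub hxn, by simp⟩⟩
  obtain ⟨U₁, a, b, c, d⟩ := h1
  obtain ⟨U₂, e, f, g⟩ := h2
  exact ⟨U₁, U₂, a, b, c, e, f, fun j hj => g j (d j hj.1) hj.2⟩
end

section
/- Let G = (V,E) be a finite simple graph and let W_1, …, W_t ⊆ V be subsets such that no two of them are crossing. Suppose there exists at least one nonempty subset of V distinct from every W_i. Call a pair (U_1, U_2) of disjoint subsets of V with |U_1| ≤ 2 and |U_2| ≤ 1 admissible if no W_j (1 ≤ j ≤ t) satisfies both W_j ⊇ U_1 and W_j ∩ U_2 = ∅. Then the maximum of dens(Z) over all nonempty Z ⊆ V with Z ≠ W_i for every i equals the maximum, over admissible pairs (U_1, U_2), of the maximum of dens(Z) over all nonempty Z with U_1 ⊆ Z ⊆ V \ U_2. -/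
open Finset

theorem cross_cases {V : Type*} [DecidableEq V] {A B : Finset V} (h : ¬ Crossing A B)
    {a : V} (ha : a ∈ A) (hb : a ∈ B) : A ⊆ B ∨ B ⊆ A := by
  by_contra hc
  rw [not_or] at hc
  exact h ⟨⟨a, mem_inter.2 ⟨ha, hb⟩⟩, sdiff_nonempty.2 hc.1, sdiff_nonempty.2 hc.2⟩

theorem exists_U₁ {V : Type*} [DecidableEq V] {t : ℕ} (W : Fin t → Finset V)
    (hcr : ∀ i j : Fin t, ¬ Crossing (W i) (W j)) (Z : Finset V) (hZ : Z.Nonempty) :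
    ∃ U : Finset V, U.Nonempty ∧ U ⊆ Z ∧ U.card ≤ 2 ∧ ∀ j, U ⊆ W j → Z ⊆ W j := by
  by_cases hM : ((univ : Finset (Fin t)).filter
      (fun i => (W i ∩ Z).Nonempty ∧ ¬ Z ⊆ W i)).Nonempty
  · obtain ⟨m, hm, hmax⟩ := exists_max_image _ (fun i => (W i).card) hM
    simp only [mem_filter, mem_univ, true_and] at hm hmax
    obtain ⟨⟨a, ha⟩, hn⟩ := hm
    obtain ⟨b, hbZ, hbm⟩ := not_subset.1 hn
    rw [mem_inter] at ha
    refine ⟨{a, b}, by simp, by simp [insert_subset_iff, ha.2, hbZ], card_le_two, ?_⟩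
    intro j hj
    have haj : a ∈ W j := hj (by simp)
    have hbj : b ∈ W j := hj (by simp)
    by_contra hc
    have hle := hmax j ⟨⟨a, mem_inter.2 ⟨haj, ha.2⟩⟩, hc⟩
    rcases cross_cases (hcr m j) ha.1 haj with h | h
    · rw [eq_of_subset_of_card_le h hle] at hbm
      exact hbm hbj
    · exact hbm (h hbj)
  · obtain ⟨a, ha⟩ := hZ
    refine ⟨{a}, by simp, by simpa using ha, by simp, ?_⟩
    intro j hj
    by_contra hc
    exact hM ⟨j, by simpa using ⟨⟨a, mem_inter.2 ⟨hj (by simp), ha⟩⟩, hc⟩⟩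

theorem exists_U₂ {V : Type*} [DecidableEq V] {t : ℕ} (W : Fin t → Finset V)
    (hcr : ∀ i j : Fin t, ¬ Crossing (W i) (W j)) (Z : Finset V) (hZ : Z.Nonempty)
    (hne : ∀ i, Z ≠ W i) :
    ∃ U : Finset V, Disjoint Z U ∧ U.card ≤ 1 ∧ ∀ j, Z ⊆ W j → W j ∩ U ≠ ∅ := by
  by_cases hM : ((univ : Finset (Fin t)).filter (fun i => Z ⊆ W i)).Nonempty
  · obtain ⟨m, hm, hmin⟩ := exists_min_image _ (fun i => (W i).card) hM
    simp only [mem_filter, mem_univ, true_and] at hm hmin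
    obtain ⟨u, hu, huZ⟩ := not_subset.1 (fun h => hne m (Subset.antisymm hm h))
    refine ⟨{u}, by simpa using huZ, by simp, ?_⟩
    intro j hj
    obtain ⟨a, ha⟩ := hZ
    have hs : W m ⊆ W j := by
      rcases cross_cases (hcr m j) (hm ha) (hj ha) with h | h
      · exact h
      · exact (eq_of_subset_of_card_le h (hmin j hj)).ge
    exact (show (W j ∩ {u}).Nonempty from ⟨u, by simpa using hs hu⟩).ne_empty
  · exact ⟨∅, by simp, by simp, fun j hj => (hM ⟨j, by simpa using hj⟩).elim⟩

/-- Theorem 10 of the paper, correctness of Algorithm 4. -/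
theorem stmt_7 {V : Type*} [Fintype V] [DecidableEq V]
    (G : SimpleGraph V) {t : ℕ} (W : Fin t → Finset V)
    (hcr : ∀ i j : Fin t, ¬ Crossing (W i) (W j))
    (hex : ∃ Z : Finset V, Z.Nonempty ∧ ∀ i, Z ≠ W i) :
    sSup {x : ℝ | ∃ Z : Finset V, Z.Nonempty ∧ (∀ i, Z ≠ W i) ∧ x = dens G Z} =
    sSup {x : ℝ | ∃ U₁ U₂ Z : Finset V, Disjoint U₁ U₂ ∧ U₁.card ≤ 2 ∧ U₂.card ≤ 1 ∧
      (∀ j : Fin t, ¬ (U₁ ⊆ W j ∧ W j ∩ U₂ = ∅)) ∧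
      Z.Nonempty ∧ U₁ ⊆ Z ∧ Z ⊆ U₂ᶜ ∧ x = dens G Z} := by
  congr 1
  ext x
  constructor
  · rintro ⟨Z, hZ, hne, rfl⟩
    obtain ⟨U₁, -, h1, hc1, h1'⟩ := exists_U₁ W hcr Z hZ
    obtain ⟨U₂, h2, hc2, h2'⟩ := exists_U₂ W hcr Z hZ hne
    exact ⟨U₁, U₂, Z, disjoint_of_subset_left h1 h2, hc1, hc2,
      fun j hj => h2' j (h1' j hj.1) hj.2, hZ, h1, subset_compl_iff_disjoint_right.2 h2, rfl⟩
  · rintro ⟨U₁, U₂, Z, -, -, -, had, hZ, h1, h2, rfl⟩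
    refine ⟨Z, hZ, fun i hi => had i ?_, rfl⟩
    subst hi
    exact ⟨h1, disjoint_iff_inter_eq_empty.1 (subset_compl_iff_disjoint_right.1 h2)⟩
end

section
/- Let V be a finite set with |V| > 5 and let W_i, W_j ⊆ V be crossing subsets with |W_i ∩ W_j| ≥ 4. Then the family of sets { W_i ∪ {v} : v ∈ V \ W_i } ∪ { W_j ∪ {u} : u ∈ V \ W_j } ∪ { W_j \ {w} : w ∈ W_i ∩ W_j } contains at least |V| - 1 pairwise distinct sets. -/
open Finset

/-- counting claim, second case of the proof of Lemma 11 of the paper. -/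
theorem stmt_9 {V : Type*} [Fintype V] [DecidableEq V]
    (hV : 5 < Fintype.card V) (Wi Wj : Finset V) (hcr : Crossing Wi Wj)
    (hint : 4 ≤ (Wi ∩ Wj).card) :
    Fintype.card V - 1 ≤
      ((Wiᶜ.image fun v => insert v Wi) ∪ (Wjᶜ.image fun u => insert u Wj) ∪
        ((Wi ∩ Wj).image fun w => Wj.erase w)).card := by
  obtain ⟨-, ⟨x, hx⟩, ⟨y, hy⟩⟩ := hcr
  rw [mem_sdiff] at hx hy
  have hA : (Wiᶜ.image fun v => insert v Wi).card = Wiᶜ.card := by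
    apply card_image_of_injOn
    intro p hp q hq h
    simp only [coe_compl, Set.mem_compl_iff, mem_coe] at hp hq
    have h' : p ∈ insert q Wi := by
      have : insert p Wi = insert q Wi := h
      rw [← this]; exact mem_insert_self _ _
    exact (mem_insert.1 h').resolve_right hp
  have hB : (Wjᶜ.image fun v => insert v Wj).card = Wjᶜ.card := by
    apply card_image_of_injOn
    intro p hp q hq h
    simp only [coe_compl, Set.mem_compl_iff, mem_coe] at hp hq
    have h' : p ∈ insert q Wj := by
      have : insert p Wj = insert q Wj := h
      rw [← this]; exact mem_insert_self _ _
    exact (mem_insert.1 h').resolve_right hp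
  have hC : ((Wi ∩ Wj).image fun w => Wj.erase w).card = (Wi ∩ Wj).card := by
    apply card_image_of_injOn
    intro p hp q hq h
    simp only [coe_inter, Set.mem_inter_iff, mem_coe] at hp hq
    by_contra hne
    have h' : p ∈ Wj.erase q := mem_erase.2 ⟨hne, hp.2⟩
    have h2 : Wj.erase p = Wj.erase q := h
    rw [← h2] at h'
    exact notMem_erase _ _ h'
  have hAB : ((Wiᶜ.image fun v => insert v Wi) ∩ (Wjᶜ.image fun u => insert u Wj)).card ≤ 1 := by
    have hsub : ((Wiᶜ.image fun v => insert v Wi) ∩ (Wjᶜ.image fun u => insert u Wj))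
        ⊆ {insert y Wi} := by
      intro S hS
      simp only [mem_inter, mem_image] at hS
      obtain ⟨⟨v, -, rfl⟩, ⟨u, -, hu⟩⟩ := hS
      have hyv : y ∈ insert v Wi := by
        rw [← hu]; exact mem_insert_of_mem hy.1
      have := (mem_insert.1 hyv).resolve_right hy.2
      rw [this]; exact mem_singleton_self _
    exact (card_le_card hsub).trans (by simp)
  have hdis : Disjoint ((Wiᶜ.image fun v => insert v Wi) ∪ (Wjᶜ.image fun u => insert u Wj))
      ((Wi ∩ Wj).image fun w => Wj.erase w) := by
    rw [disjoint_left]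
    intro S hS hS'
    obtain ⟨w, hw, rfl⟩ := mem_image.1 hS'
    rw [mem_inter] at hw
    simp only [mem_union, mem_image] at hS
    apply notMem_erase w Wj
    rcases hS with ⟨v, -, h⟩ | ⟨v, -, h⟩
    · rw [← h]; exact mem_insert_of_mem hw.1
    · rw [← h]; exact mem_insert_of_mem hw.2
  rw [card_union_of_disjoint hdis]
  have h1 := card_union_add_card_inter (Wiᶜ.image fun v => insert v Wi)
    (Wjᶜ.image fun u => insert u Wj)
  have h2 := card_union_add_card_inter Wi Wj
  have h3 := card_le_univ (Wi ∪ Wj)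
  have h4 := card_add_card_compl Wi
  have h5 := card_add_card_compl Wj
  omega
end

section
/- Let G = (V,E) be a finite simple graph, let W ⊆ V with |W| ≥ 2, and let S ⊆ W. Then ∑_{u ∈ S} dens(W \ {u}) ≥ (|S| - 2) · dens(W). -/
open Finset

lemma edgeCount_eq_card {V : Type*} [Fintype V] [DecidableEq V]
    (G : SimpleGraph V) (U : Finset V) [DecidablePred fun e : Sym2 V => e ∈ G.edgeSet ∧ ∀ v ∈ e, v ∈ U] :
    edgeCount G U = (univ.filter fun e : Sym2 V => e ∈ G.edgeSet ∧ ∀ v ∈ e, v ∈ U).card := by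
  unfold edgeCount
  rw [← Set.ncard_coe_finset]
  congr 1
  ext e
  simp

lemma sum_edgeCount_erase {V : Type*} [Fintype V] [DecidableEq V]
    (G : SimpleGraph V) (W S : Finset V) :
    S.card * edgeCount G W ≤ ∑ u ∈ S, edgeCount G (W.erase u) + 2 * edgeCount G W := by
  classical
  simp only [edgeCount_eq_card]
  set F := univ.filter fun e : Sym2 V => e ∈ G.edgeSet ∧ ∀ v ∈ e, v ∈ W with hF
  have h1 : ∀ u, (univ.filter fun e : Sym2 V => e ∈ G.edgeSet ∧ ∀ v ∈ e, v ∈ W.erase u)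
      = F.filter fun e => u ∉ e := by
    intro u
    ext e
    simp only [hF, mem_filter, mem_univ, true_and, mem_erase]
    constructor
    · rintro ⟨h, h'⟩
      exact ⟨⟨h, fun v hv => (h' v hv).2⟩, fun hu => (h' u hu).1 rfl⟩
    · rintro ⟨⟨h, h'⟩, hu⟩
      exact ⟨h, fun v hv => ⟨fun hvu => hu (hvu ▸ hv), h' v hv⟩⟩
  simp only [h1]
  have h2 : ∑ u ∈ S, (F.filter fun e => u ∉ e).card
      = ∑ e ∈ F, (S.filter fun u => u ∉ e).card := by
    simp only [card_filter]
    exact sum_comm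
  have h3 : ∀ e ∈ F, S.card ≤ (S.filter fun u => u ∉ e).card + 2 := by
    intro e _
    have h4 := card_filter_add_card_filter_not (s := S) (fun u => u ∈ e)
    have h5 : (S.filter fun u => u ∈ e).card ≤ 2 := by
      induction e with
      | _ a b =>
        refine (card_le_card (t := {a, b}) ?_).trans card_le_two
        intro u hu
        simpa using (mem_filter.1 hu).2
    omega
  have h6 := sum_le_sum h3
  rw [sum_add_distrib, sum_const, sum_const, smul_eq_mul, smul_eq_mul] at h6
  rw [h2]
  linarith

/-- vertex-deletion averaging inequality, proof of Lemma 12 of the paper. -/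
theorem stmt_11 {V : Type*} [Fintype V] [DecidableEq V]
    (G : SimpleGraph V) (W : Finset V) (hW : 2 ≤ W.card)
    (S : Finset V) (hS : S ⊆ W) :
    ∑ u ∈ S, dens G (W.erase u) ≥ ((S.card : ℝ) - 2) * dens G W := by
  have hw : (2 : ℝ) ≤ W.card := by exact_mod_cast hW
  have h := sum_edgeCount_erase G W S
  have h' : (S.card : ℝ) * edgeCount G W
      ≤ ∑ u ∈ S, (edgeCount G (W.erase u) : ℝ) + 2 * edgeCount G W := by exact_mod_cast h
  have h1 : ∀ u ∈ S, (edgeCount G (W.erase u) : ℝ) / W.card ≤ dens G (W.erase u) := by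
    intro u hu
    unfold _root_.dens
    have hc : ((W.erase u).card : ℝ) = W.card - 1 := by
      rw [card_erase_of_mem (hS hu), Nat.cast_sub (by omega)]
      simp
    rw [hc]
    apply div_le_div_of_nonneg_left (Nat.cast_nonneg _) <;> linarith
  refine ge_iff_le.2 (le_trans ?_ (sum_le_sum h1))
  rw [← sum_div, _root_.dens, ← mul_div_assoc]
  apply div_le_div_of_nonneg_right _ (by linarith)
  linarith
end

section
/- Let G = (V,E) be a finite simple graph, let W ⊆ V with |W| ≥ 2, and let S ⊆ W with |S| ≥ 4. Then there exists u ∈ S such that dens(W \ {u}) ≥ (1/2) · dens(W). -/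
open Finset

open Classical in
theorem aux_count {V : Type*} [Fintype V] [DecidableEq V]
    (G : SimpleGraph V) (W S : Finset V) (hS4 : 4 ≤ S.card) :
    ∃ u ∈ S, edgeCount G W ≤ 2 * edgeCount G (W.erase u) := by
  set E : Finset (Sym2 V) := Finset.univ.filter (fun e => e ∈ G.edgeSet ∧ ∀ v ∈ e, v ∈ W) with hE
  have h1 : edgeCount G W = E.card := by
    unfold edgeCount
    rw [← Set.ncard_coe_finset]
    congr 1
    ext e
    simp [hE]
  have h2 : ∀ u, edgeCount G (W.erase u) = (E.filter (fun e => u ∉ e)).card := by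
    intro u
    unfold edgeCount
    rw [← Set.ncard_coe_finset]
    congr 1
    ext e
    simp only [hE, Set.mem_ofPred_eq, Finset.mem_erase, Finset.coe_filter, Finset.mem_filter,
      Finset.mem_univ, true_and]
    constructor
    · rintro ⟨a, b⟩
      exact ⟨⟨a, fun v hv => (b v hv).2⟩, fun hu => (b u hu).1 rfl⟩
    · rintro ⟨⟨a, b⟩, c⟩
      exact ⟨a, fun v hv => ⟨fun h => c (h ▸ hv), b v hv⟩⟩
  have h3 : ∀ u, (E.filter (fun e => u ∈ e)).card + (E.filter (fun e => u ∉ e)).card = E.card :=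
    fun u => Finset.card_filter_add_card_filter_not _
  have h4 : ∑ u ∈ S, (E.filter (fun e => u ∈ e)).card
      = ∑ e ∈ E, (S.filter (fun u => u ∈ e)).card :=
    Finset.sum_card_bipartiteAbove_eq_sum_card_bipartiteBelow (fun u e => u ∈ e)
  have h5 : ∀ e : Sym2 V, (S.filter (fun u => u ∈ e)).card ≤ 2 := by
    intro e
    induction e using Sym2.ind with
    | _ a b =>
      refine (Finset.card_le_card (t := {a, b}) ?_).trans Finset.card_le_two
      intro x hx
      simpa using (Finset.mem_filter.1 hx).2
  have h6 : ∑ e ∈ E, (S.filter (fun u => u ∈ e)).card ≤ E.card * 2 := by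
    simpa using Finset.sum_le_card_nsmul E _ 2 (fun e _ => h5 e)
  by_contra! hc
  have h7 : ∀ u ∈ S, E.card + 1 ≤ 2 * (E.filter (fun e => u ∈ e)).card := by
    intro u hu
    have a := hc u hu
    rw [h1, h2] at a
    have b := h3 u
    omega
  have h8 := Finset.sum_le_sum h7
  rw [← Finset.mul_sum, h4, Finset.sum_const, smul_eq_mul] at h8
  nlinarith

/-- averaging consequence in the proof of Lemma 12 of the paper. -/
theorem stmt_12 {V : Type*} [Fintype V] [DecidableEq V]
    (G : SimpleGraph V) (W : Finset V) (hW : 2 ≤ W.card)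
    (S : Finset V) (hS : S ⊆ W) (hS4 : 4 ≤ S.card) :
    ∃ u ∈ S, dens G (W.erase u) ≥ (1 / 2) * dens G W := by
  obtain ⟨u, hu, h⟩ := aux_count G W S hS4
  refine ⟨u, hu, ?_⟩
  have hc := Finset.card_erase_add_one (hS hu)
  unfold _root_.dens
  have hp : (0 : ℝ) < (W.erase u).card := by
    have : 0 < (W.erase u).card := by omega
    exact_mod_cast this
  have hle : ((W.erase u).card : ℝ) ≤ W.card := by
    exact_mod_cast (by omega : (W.erase u).card ≤ W.card)
  have h' : (edgeCount G W : ℝ) ≤ 2 * (edgeCount G (W.erase u) : ℝ) := by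
    exact_mod_cast h
  calc (1 / 2 : ℝ) * ((edgeCount G W : ℝ) / W.card)
      = ((edgeCount G W : ℝ) / 2) / W.card := by ring
    _ ≤ (edgeCount G (W.erase u) : ℝ) / (W.erase u).card := by
        apply div_le_div₀ (by positivity) (by linarith) hp hle
end

section
/- Let G = (V,E) be a finite simple graph, let k ≥ 1, and let W_1, …, W_k be pairwise distinct nonempty subsets of V such that, for every 1 ≤ i ≤ k and every nonempty Z ⊆ V with Z ≠ W_1, …, Z ≠ W_{i-1}, one has dens(W_i) ≥ (1/2) · dens(Z). Then for every tuple W°_1, …, W°_k of pairwise distinct nonempty subsets of V: ∑_{i=1}^k dens(W_i) ≥ (1/2) · ∑_{i=1}^k dens(W°_i). -/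
open Finset

/-- inductive core of Lemma 13 of the paper. -/
theorem stmt_13 {V : Type*} [Fintype V] [DecidableEq V]
    (G : SimpleGraph V) {k : ℕ} (hk : 1 ≤ k)
    (W : Fin k → Finset V) (hWne : ∀ i, (W i).Nonempty)
    (hWinj : Function.Injective W)
    (hhalf : ∀ i : Fin k, ∀ Z : Finset V, Z.Nonempty →
      (∀ j : Fin k, j < i → Z ≠ W j) → dens G (W i) ≥ (1 / 2) * dens G Z)
    (Wo : Fin k → Finset V) (hWone : ∀ i, (Wo i).Nonempty)
    (hWoinj : Function.Injective Wo) :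
    (∑ i, dens G (W i)) ≥ (1 / 2) * (∑ i, dens G (Wo i)) := by
  classical
  have hnn : ∀ U, 0 ≤ dens G U := fun U => by unfold _root_.dens; positivity
  set A := Finset.univ.image W with hA
  set B := Finset.univ.image Wo with hB
  have hAs : ∑ i, dens G (W i) = ∑ U ∈ A, dens G U :=
    (Finset.sum_image (fun a _ b _ h => hWinj h)).symm
  have hBs : ∑ i, dens G (Wo i) = ∑ U ∈ B, dens G U :=
    (Finset.sum_image (fun a _ b _ h => hWoinj h)).symm
  have hcard : A.card = B.card := by
    rw [hA, hB, Finset.card_image_of_injective _ hWinj, Finset.card_image_of_injective _ hWoinj]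
  have hcard2 : (B \ A).card = (A \ B).card := by
    have h1 := Finset.card_sdiff_add_card_inter A B
    have h2 := Finset.card_sdiff_add_card_inter B A
    rw [Finset.inter_comm] at h2
    omega
  have hle : ∀ X ∈ A, ∀ Z ∈ B \ A, (1 / 2) * dens G Z ≤ dens G X := by
    intro X hX Z hZ
    rw [Finset.mem_sdiff] at hZ
    obtain ⟨i, -, rfl⟩ := Finset.mem_image.1 hX
    obtain ⟨j, -, hj⟩ := Finset.mem_image.1 hZ.1
    refine hhalf i Z (hj ▸ hWone j) ?_
    rintro l - rfl
    exact hZ.2 (Finset.mem_image_of_mem _ (Finset.mem_univ _))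
  have hdiff : ∑ Z ∈ B \ A, (1 / 2) * dens G Z ≤ ∑ X ∈ A \ B, dens G X := by
    let e := Finset.equivOfCardEq hcard2
    rw [← Finset.sum_coe_sort (B \ A), ← Finset.sum_coe_sort (A \ B), ← Equiv.sum_comp e]
    exact Finset.sum_le_sum fun z _ =>
      hle _ (Finset.mem_sdiff.1 (e z).2).1 _ z.2
  have hint : ∑ Z ∈ A ∩ B, (1 / 2) * dens G Z ≤ ∑ X ∈ A ∩ B, dens G X :=
    Finset.sum_le_sum fun z _ => by linarith [hnn z]
  rw [hAs, hBs, Finset.mul_sum, ← Finset.sum_inter_add_sum_sdiff A B,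
    ← Finset.sum_inter_add_sum_sdiff B A, Finset.inter_comm B A]
  exact add_le_add hint hdiff
end

section
/- Let G = (V,E) be a finite simple graph with V nonempty and set λ = 3|V|³. Let V_1, V_2, V_3 be nonempty subsets of V with r(V_1, V_2, V_3) ≥ (|V| - 3)/2 + 18|V|³. Then V_1, V_2, V_3 are pairwise disjoint, V_1 ∪ V_2 ∪ V_3 = V, and each induced subgraph G[V_i] (1 ≤ i ≤ 3) is a clique. -/
open Finset

/-- The objective function of Top-3-Overlapping Densest Subgraphs for a triple. -/
noncomputable def rval3 {V : Type*} [DecidableEq V] (G : SimpleGraph V) (lam : ℝ)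
    (W₁ W₂ W₃ : Finset V) : ℝ :=
  dens G W₁ + dens G W₂ + dens G W₃ +
    lam * (ddist W₁ W₂ + ddist W₁ W₃ + ddist W₂ W₃)

lemma edge_subset {V : Type*} [DecidableEq V] (G : SimpleGraph V) (U : Finset V) :
    {e : Sym2 V | e ∈ G.edgeSet ∧ ∀ v ∈ e, v ∈ U} ⊆
      ((U.offDiag.image Sym2.mk.uncurry : Finset (Sym2 V)) : Set (Sym2 V)) := by
  intro e he
  induction e using Sym2.ind with
  | _ a b =>
    obtain ⟨h1, h2⟩ := he
    have hab : G.Adj a b := h1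
    have ha : a ∈ U := h2 a (by simp)
    have hb : b ∈ U := h2 b (by simp)
    rw [Finset.mem_coe, Finset.mem_image]
    exact ⟨(a, b), Finset.mem_offDiag.2 ⟨ha, hb, hab.ne⟩, rfl⟩

lemma edge_card {V : Type*} [DecidableEq V] (U : Finset V) :
    (((U.offDiag.image Sym2.mk.uncurry).card : ℕ) : ℝ) = (U.card : ℝ) * ((U.card : ℝ) - 1) / 2 := by
  rw [Sym2.card_image_offDiag, Nat.cast_choose_two]

lemma dens_le {V : Type*} [DecidableEq V] (G : SimpleGraph V) (U : Finset V)
    (hU : U.Nonempty) : dens G U ≤ ((U.card : ℝ) - 1) / 2 := by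
  have hc : (0 : ℝ) < U.card := by exact_mod_cast hU.card_pos
  have h := Set.ncard_le_ncard (edge_subset G U) (Finset.finite_toSet _)
  rw [Set.ncard_coe_finset] at h
  have h' : (edgeCount G U : ℝ) ≤ (((U.offDiag.image Sym2.mk.uncurry).card : ℕ) : ℝ) := by
    exact_mod_cast h
  rw [edge_card] at h'
  unfold _root_.dens
  rw [div_le_iff₀ hc]
  linarith

lemma clique_of_dens {V : Type*} [DecidableEq V] (G : SimpleGraph V) (U : Finset V)
    (hU : U.Nonempty) (hd : ((U.card : ℝ) - 1) / 2 ≤ dens G U) : G.IsClique (U : Set V) := by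
  have hc : (0 : ℝ) < U.card := by exact_mod_cast hU.card_pos
  unfold _root_.dens at hd
  rw [le_div_iff₀ hc] at hd
  have h' : (((U.offDiag.image Sym2.mk.uncurry).card : ℕ) : ℝ) ≤ (edgeCount G U : ℝ) := by
    rw [edge_card]; linarith
  have h'' : (U.offDiag.image Sym2.mk.uncurry).card ≤ edgeCount G U := by exact_mod_cast h'
  have heq := Set.eq_of_subset_of_ncard_le (edge_subset G U)
    (by rw [Set.ncard_coe_finset]; exact h'') (Finset.finite_toSet _)
  intro a ha b hb hab
  have hm : s(a, b) ∈ ((U.offDiag.image Sym2.mk.uncurry : Finset (Sym2 V)) : Set (Sym2 V)) := by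
    rw [Finset.mem_coe, Finset.mem_image]
    exact ⟨(a, b), Finset.mem_offDiag.2 ⟨ha, hb, hab⟩, rfl⟩
  rw [← heq] at hm
  exact hm.1

lemma ddist_le {V : Type*} [DecidableEq V] (U Z : Finset V) : ddist U Z ≤ 2 := by
  unfold ddist
  split_ifs
  · norm_num
  · have : (0 : ℝ) ≤ ((U ∩ Z).card : ℝ) ^ 2 / ((U.card : ℝ) * (Z.card : ℝ)) := by positivity
    linarith

lemma ddist_le' {V : Type*} [Fintype V] [Nonempty V] [DecidableEq V] (U Z : Finset V)
    (h : ¬ Disjoint U Z) : 3 * (Fintype.card V : ℝ) ^ 3 * ddist U Z ≤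
      3 * (Fintype.card V : ℝ) ^ 3 * 2 - 3 * (Fintype.card V : ℝ) := by
  have hn : (1 : ℝ) ≤ Fintype.card V := by exact_mod_cast Fintype.card_pos (α := V)
  have hi : (U ∩ Z).Nonempty := Finset.not_disjoint_iff_nonempty_inter.1 h
  have hi1 : (1 : ℝ) ≤ (U ∩ Z).card := by exact_mod_cast hi.card_pos
  have hU1 : (0 : ℝ) < U.card := by exact_mod_cast (hi.mono Finset.inter_subset_left).card_pos
  have hZ1 : (0 : ℝ) < Z.card := by exact_mod_cast (hi.mono Finset.inter_subset_right).card_pos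
  have hU : (U.card : ℝ) ≤ Fintype.card V := by exact_mod_cast Finset.card_le_univ U
  have hZ : (Z.card : ℝ) ≤ Fintype.card V := by exact_mod_cast Finset.card_le_univ Z
  set n : ℝ := (Fintype.card V : ℝ)
  have hd : ddist U Z ≤ 2 - 1 / (n * n) := by
    unfold ddist
    split_ifs
    · have : 1 / (n * n) ≤ 1 := by
        rw [div_le_one (by positivity)]; nlinarith
      linarith
    · have : 1 / (n * n) ≤ ((U ∩ Z).card : ℝ) ^ 2 / ((U.card : ℝ) * (Z.card : ℝ)) := by
        apply div_le_div₀ (by positivity) (by nlinarith) (by positivity)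
        exact mul_le_mul hU hZ hZ1.le (by linarith)
      linarith
  have h3 : 3 * n ^ 3 * ddist U Z ≤ 3 * n ^ 3 * (2 - 1 / (n * n)) :=
    mul_le_mul_of_nonneg_left hd (by positivity)
  have h4 : 3 * n ^ 3 * (2 - 1 / (n * n)) = 3 * n ^ 3 * 2 - 3 * n := by
    field_simp
  linarith

/-- Lemma 16 of the paper. -/
theorem stmt_16 {V : Type*} [Fintype V] [DecidableEq V] [Nonempty V]
    (G : SimpleGraph V) (V₁ V₂ V₃ : Finset V)
    (h1 : V₁.Nonempty) (h2 : V₂.Nonempty) (h3 : V₃.Nonempty)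
    (hr : rval3 G (3 * (Fintype.card V : ℝ) ^ 3) V₁ V₂ V₃ ≥
      ((Fintype.card V : ℝ) - 3) / 2 + 18 * (Fintype.card V : ℝ) ^ 3) :
    (Disjoint V₁ V₂ ∧ Disjoint V₁ V₃ ∧ Disjoint V₂ V₃) ∧
    V₁ ∪ V₂ ∪ V₃ = Finset.univ ∧
    (G.IsClique (V₁ : Set V) ∧ G.IsClique (V₂ : Set V) ∧ G.IsClique (V₃ : Set V)) := by
  have hn : (1 : ℝ) ≤ Fintype.card V := by exact_mod_cast Fintype.card_pos (α := V)
  have d1 := dens_le G V₁ h1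
  have d2 := dens_le G V₂ h2
  have d3 := dens_le G V₃ h3
  have c1 : (V₁.card : ℝ) ≤ Fintype.card V := by exact_mod_cast Finset.card_le_univ V₁
  have c2 : (V₂.card : ℝ) ≤ Fintype.card V := by exact_mod_cast Finset.card_le_univ V₂
  have c3 : (V₃.card : ℝ) ≤ Fintype.card V := by exact_mod_cast Finset.card_le_univ V₃
  have hl : (0 : ℝ) ≤ 3 * (Fintype.card V : ℝ) ^ 3 := by positivity
  have e12 := mul_le_mul_of_nonneg_left (ddist_le V₁ V₂) hl
  have e13 := mul_le_mul_of_nonneg_left (ddist_le V₁ V₃) hl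
  have e23 := mul_le_mul_of_nonneg_left (ddist_le V₂ V₃) hl
  unfold rval3 at hr
  rw [mul_add, mul_add] at hr
  have D12 : Disjoint V₁ V₂ := by
    by_contra h
    have := ddist_le' _ _ h
    linarith
  have D13 : Disjoint V₁ V₃ := by
    by_contra h
    have := ddist_le' _ _ h
    linarith
  have D23 : Disjoint V₂ V₃ := by
    by_contra h
    have := ddist_le' _ _ h
    linarith
  have hcard : (V₁ ∪ V₂ ∪ V₃).card = V₁.card + V₂.card + V₃.card := by
    rw [Finset.card_union_of_disjoint (Finset.disjoint_union_left.2 ⟨D13, D23⟩),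
      Finset.card_union_of_disjoint D12]
  have hle : (V₁.card : ℝ) + V₂.card + V₃.card ≤ Fintype.card V := by
    have := Finset.card_le_univ (V₁ ∪ V₂ ∪ V₃)
    rw [hcard] at this
    exact_mod_cast this
  refine ⟨⟨D12, D13, D23⟩, ?_, clique_of_dens G _ h1 (by linarith),
    clique_of_dens G _ h2 (by linarith), clique_of_dens G _ h3 (by linarith)⟩
  rw [← Finset.card_eq_iff_eq_univ, hcard]
  have : (V₁.card : ℝ) + V₂.card + V₃.card = Fintype.card V := by linarith
  exact_mod_cast this
end
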